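/- Let v > 0 and q ∈ ℝ with v − q ≥ 0 and v + q ≥ 0, let W be a d×d real symmetric positive definite matrix and R a d×d real symmetric matrix with both W − R and W + R positive semidefinite. Set ξ = v⁻¹(R − q·v⁻¹·W), A(t) = v⁻¹W + tI, and ρ(t) = A(t)^{−1/2} ξ A(t)^{−1/2} for t ≥ 0. Let α ≥ 0 be a real number and ν a Borel measure on [0,∞) such that the functions t ↦ t²·tr(ρ(t)²) and t ↦ t²·tr(ρ(t)³) are ν-integrable, and define D₂ = α·tr(ξ²) + ∫₀^∞ t²·tr(ρ(t)²) dν(t) and D₃ = −2·∫₀^∞ t²·tr(ρ(t)³) dν(t). Then 3(v − q)·D₂ + v·D₃ ≥ 0. -/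

import Mathlib

open Matrix
open scoped Classical

/-- The positive semidefinite square root of a positive semidefinite matrix (the definition of the
older Mathlib, which has since been removed), over `ℝ`. -/
noncomputable def Matrix.PosSemidef.sqrt {n : Type*} [Fintype n] [DecidableEq n]
    {A : Matrix n n ℝ} (hA : A.PosSemidef) : Matrix n n ℝ :=
  hA.1.eigenvectorUnitary.1 * diagonal (Real.sqrt ∘ hA.1.eigenvalues) *
    (star hA.1.eigenvectorUnitary : Matrix n n ℝ)

/-- `A^(-1/2)`: the inverse of the unique positive semidefinite square root of `A`
(junk value `0` if `A` is not positive semidefinite). -/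
noncomputable def invSqrt {d : ℕ} (A : Matrix (Fin d) (Fin d) ℝ) : Matrix (Fin d) (Fin d) ℝ :=
  if h : A.PosSemidef then h.sqrt⁻¹ else 0

/-!
Since `ξ` is the derivative of `v⁻¹W` in the direction `(q, R)`, the boundary condition `R ⪯ W`
becomes `ξ ⪯ c A(t)` with `c = (v - q) / v`, because `c A(t) - ξ = v⁻¹(W - R) + ctI`. Conjugating
by `A(t)^{-1/2}` gives `ρ(t) ⪯ cI`, and conjugating once more by `ρ(t)` and taking traces gives
`tr(ρ(t)³) ≤ c tr(ρ(t)²)`. Hence `v` times the integral of `t² tr(ρ(t)³)` is at most `v - q` times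
that of `t² tr(ρ(t)²)`, so `v D₃` costs at most two thirds of `3(v - q) D₂`.
-/

section Sqrt

variable {n : Type*} [Fintype n] [DecidableEq n] {A : Matrix n n ℝ}

theorem isHermitian_posSemidef_sqrt (hA : A.PosSemidef) : hA.sqrt.IsHermitian :=
  isHermitian_mul_mul_conjTranspose _ (isHermitian_diagonal _)

theorem posSemidef_sqrt_mul_self (hA : A.PosSemidef) : hA.sqrt * hA.sqrt = A := by
  let φ := Unitary.conjStarAlgAut ℝ (Matrix n n ℝ) hA.1.eigenvectorUnitary
  have sqrt_mul_sqrt_eigenvalues (i : n) :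
      √(hA.1.eigenvalues i) * √(hA.1.eigenvalues i) = hA.1.eigenvalues i :=
    Real.mul_self_sqrt (hA.eigenvalues_nonneg i)
  calc hA.sqrt * hA.sqrt
      = φ (diagonal (Real.sqrt ∘ hA.1.eigenvalues)) * φ (diagonal (Real.sqrt ∘ hA.1.eigenvalues)) :=
        rfl
    _ = φ (diagonal hA.1.eigenvalues) := by
        simp only [← map_mul, diagonal_mul_diagonal, Function.comp_apply,
          sqrt_mul_sqrt_eigenvalues]
    _ = A := hA.1.spectral_theorem.symm

theorem isUnit_posSemidef_sqrt (hA : A.PosDef) : IsUnit hA.posSemidef.sqrt :=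
  isUnit_of_mul_isUnit_left ((posSemidef_sqrt_mul_self hA.posSemidef).symm ▸ hA.isUnit)

end Sqrt

section InvSqrt

variable {d : ℕ} {A X : Matrix (Fin d) (Fin d) ℝ}

theorem isHermitian_invSqrt (A : Matrix (Fin d) (Fin d) ℝ) : (invSqrt A).IsHermitian := by
  unfold invSqrt
  split_ifs with hA
  · exact (isHermitian_posSemidef_sqrt hA).inv
  · exact isHermitian_zero

theorem invSqrt_mul_mul_invSqrt (hA : A.PosDef) : invSqrt A * A * invSqrt A = 1 := by
  have hdet := (isUnit_iff_isUnit_det _).mp (isUnit_posSemidef_sqrt hA)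
  set S := hA.posSemidef.sqrt with hS
  calc invSqrt A * A * invSqrt A = S⁻¹ * (S * S) * S⁻¹ := by
        rw [invSqrt, dif_pos hA.posSemidef, hS, posSemidef_sqrt_mul_self]
    _ = 1 := by
        rw [nonsing_inv_mul_cancel_left _ _ hdet, mul_nonsing_inv _ hdet]

theorem isHermitian_invSqrt_mul_mul_invSqrt (hX : X.IsHermitian) :
    (invSqrt A * X * invSqrt A).IsHermitian := by
  simpa only [(isHermitian_invSqrt A).eq] using isHermitian_mul_mul_conjTranspose (invSqrt A) hX

theorem posSemidef_smul_one_sub_invSqrt_mul_mul_invSqrt {c : ℝ} (hA : A.PosDef)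
    (hX : (c • A - X).PosSemidef) :
    (c • (1 : Matrix (Fin d) (Fin d) ℝ) - invSqrt A * X * invSqrt A).PosSemidef := by
  have hconj := hX.mul_mul_conjTranspose_same (invSqrt A)
  rwa [(isHermitian_invSqrt A).eq, Matrix.mul_sub, Matrix.sub_mul, Matrix.mul_smul,
    Matrix.smul_mul, invSqrt_mul_mul_invSqrt hA] at hconj

end InvSqrt

section Trace

variable {n R : Type*} [Fintype n] {M X Y : Matrix n n R}

theorem trace_mul_self_nonneg_of_isHermitian [Ring R] [PartialOrder R] [StarRing R]
    [StarOrderedRing R] (hM : M.IsHermitian) : 0 ≤ (M * M).trace := by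
  simpa only [hM.eq] using (posSemidef_self_mul_conjTranspose M).trace_nonneg

theorem trace_mul_mul_le_trace_mul_mul [Ring R] [PartialOrder R] [IsOrderedAddMonoid R]
    [StarRing R] (hM : M.IsHermitian) (hXY : (Y - X).PosSemidef) :
    (M * X * M).trace ≤ (M * Y * M).trace := by
  have hconj := (hXY.mul_mul_conjTranspose_same M).trace_nonneg
  rwa [hM.eq, Matrix.mul_sub, Matrix.sub_mul, trace_sub, sub_nonneg] at hconj

theorem trace_mul_mul_self_le_of_posSemidef_smul_one_sub [CommRing R] [PartialOrder R]
    [IsOrderedAddMonoid R] [StarRing R] [DecidableEq n] {c : R} (hM : M.IsHermitian)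
    (hc : (c • (1 : Matrix n n R) - M).PosSemidef) :
    (M * M * M).trace ≤ c * (M * M).trace := by
  simpa only [Matrix.mul_smul, Matrix.smul_mul, Matrix.mul_one, trace_smul, smul_eq_mul]
    using trace_mul_mul_le_trace_mul_mul hM hc

end Trace

open MeasureTheory in
theorem integral_mul_trace_mul_mul_self_le {T n : Type*} [MeasurableSpace T] [Fintype n]
    [DecidableEq n] {μ : Measure T} {w : T → ℝ} {ρ : T → Matrix n n ℝ} {c : ℝ}
    (hw : 0 ≤ᵐ[μ] w) (hρ : ∀ t, (ρ t).IsHermitian)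
    (hc : ∀ᵐ t ∂μ, w t ≠ 0 → (c • (1 : Matrix n n ℝ) - ρ t).PosSemidef)
    (hint₂ : Integrable (fun t => w t * (ρ t * ρ t).trace) μ)
    (hint₃ : Integrable (fun t => w t * (ρ t * ρ t * ρ t).trace) μ) :
    ∫ t, w t * (ρ t * ρ t * ρ t).trace ∂μ ≤ c * ∫ t, w t * (ρ t * ρ t).trace ∂μ := by
  rw [← integral_const_mul]
  refine integral_mono_ae hint₃ (hint₂.const_mul c) ?_
  filter_upwards [hw, hc] with t hwt hct
  rcases eq_or_ne (w t) 0 with hzero | hne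
  · simp only [hzero, zero_mul, mul_zero, le_refl]
  · rw [mul_left_comm]
    exact mul_le_mul_of_nonneg_left
      (trace_mul_mul_self_le_of_posSemidef_smul_one_sub (hρ t) (hct hne)) hwt

section PerspectiveDirection

variable {n : Type*} {v q : ℝ} {W R : Matrix n n ℝ}

/-- The direction `ξ = v⁻¹(R - q v⁻¹ W)`: the derivative of the perspective map
`(v, W) ↦ v⁻¹ W` along `(q, R)`. -/
noncomputable def perspectiveDirection (v q : ℝ) (W R : Matrix n n ℝ) : Matrix n n ℝ :=
  v⁻¹ • (R - (q * v⁻¹) • W)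

theorem isHermitian_perspectiveDirection (hW : W.IsHermitian) (hR : R.IsHermitian) :
    (perspectiveDirection v q W R).IsHermitian :=
  (hR.sub (hW.smul (.all _))).smul (.all _)

theorem smul_add_smul_one_sub_perspectiveDirection [DecidableEq n] (hv : v ≠ 0) (t : ℝ) :
    ((v - q) / v) • (v⁻¹ • W + t • 1) - perspectiveDirection v q W R =
      v⁻¹ • (W - R) + ((v - q) / v * t) • 1 := by
  unfold perspectiveDirection
  match_scalars <;> field_simp
  ring

theorem posSemidef_smul_add_smul_one_sub_perspectiveDirection [DecidableEq n]
    (hv : 0 < v) (hvq : 0 ≤ v - q) (hWR : (W - R).PosSemidef) {t : ℝ} (ht : 0 ≤ t) :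
    (((v - q) / v) • (v⁻¹ • W + t • 1) - perspectiveDirection v q W R).PosSemidef := by
  rw [smul_add_smul_one_sub_perspectiveDirection hv.ne']
  have hc : 0 ≤ (v - q) / v * t := mul_nonneg (div_nonneg hvq hv.le) ht
  exact (hWR.smul (inv_nonneg.mpr hv.le)).add (PosSemidef.one.smul hc)

end PerspectiveDirection

open MeasureTheory in
theorem compatibility_inequality_general {d : ℕ} {v q α : ℝ} {W R : Matrix (Fin d) (Fin d) ℝ}
    {ν : Measure ℝ} (hv : 0 < v) (hvq : 0 ≤ v - q) (hW : W.PosSemidef)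
    (hWR : (W - R).PosSemidef) (hα : 0 ≤ α) :
    let ξ := perspectiveDirection v q W R
    let ρ : ℝ → Matrix (Fin d) (Fin d) ℝ :=
      fun t => invSqrt (v⁻¹ • W + t • 1) * ξ * invSqrt (v⁻¹ • W + t • 1)
    ∀ (_ : IntegrableOn (fun t => t ^ 2 * (ρ t * ρ t).trace) (Set.Ici (0 : ℝ)) ν)
      (_ : IntegrableOn (fun t => t ^ 2 * (ρ t * ρ t * ρ t).trace) (Set.Ici (0 : ℝ)) ν),
    let D₂ : ℝ := α * (ξ * ξ).trace + ∫ t in Set.Ici (0 : ℝ), t ^ 2 * (ρ t * ρ t).trace ∂ν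
    let D₃ : ℝ := -2 * ∫ t in Set.Ici (0 : ℝ), t ^ 2 * (ρ t * ρ t * ρ t).trace ∂ν
    0 ≤ 3 * (v - q) * D₂ + v * D₃ := by
  intro ξ ρ hint₂ hint₃ D₂ D₃
  have hR : R.IsHermitian := by simpa only [sub_sub_cancel] using hW.1.sub hWR.1
  have hξ : ξ.IsHermitian := isHermitian_perspectiveDirection hW.1 hR
  have hρ (t : ℝ) : (ρ t).IsHermitian := isHermitian_invSqrt_mul_mul_invSqrt hξ
  have hρ_le (t : ℝ) (ht : 0 < t) : (((v - q) / v) • 1 - ρ t).PosSemidef :=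
    posSemidef_smul_one_sub_invSqrt_mul_mul_invSqrt
      ((PosDef.one.smul ht).posSemidef_add (hW.smul (inv_nonneg.mpr hv.le)))
      (posSemidef_smul_add_smul_one_sub_perspectiveDirection hv hvq hWR ht.le)
  have htrace : 0 ≤ (ξ * ξ).trace := trace_mul_self_nonneg_of_isHermitian hξ
  set I₂ := ∫ t in Set.Ici (0 : ℝ), t ^ 2 * (ρ t * ρ t).trace ∂ν
  set I₃ := ∫ t in Set.Ici (0 : ℝ), t ^ 2 * (ρ t * ρ t * ρ t).trace ∂ν
  have hI₂ : 0 ≤ I₂ := integral_nonneg fun t =>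
    mul_nonneg (sq_nonneg t) (trace_mul_self_nonneg_of_isHermitian (hρ t))
  -- `A(0) = v⁻¹W` may be singular, making `invSqrt` junk there, but the weight `t²` vanishes.
  have hI₃ : I₃ ≤ (v - q) / v * I₂ :=
    integral_mul_trace_mul_mul_self_le (.of_forall sq_nonneg) hρ
      (ae_restrict_of_forall_mem measurableSet_Ici fun t ht hne =>
        hρ_le t ((Set.mem_Ici.mp ht).lt_of_ne' (ne_zero_pow two_ne_zero hne)))
      hint₂ hint₃
  have hvI₃ : v * I₃ ≤ (v - q) * I₂ := by
    rwa [div_mul_eq_mul_div, le_div_iff₀' hv] at hI₃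
  calc 0 ≤ 3 * ((v - q) * (α * (ξ * ξ).trace)) + (v - q) * I₂ + 2 * ((v - q) * I₂ - v * I₃) := by
        linarith [mul_nonneg hvq (mul_nonneg hα htrace), mul_nonneg hvq hI₂]
    _ = 3 * (v - q) * D₂ + v * D₃ := by ring

open MeasureTheory in
/-- The compatibility inequality `3(v - q) D₂ + v D₃ ≥ 0`, where
`D₂ = α tr(ξ²) + ∫₀^∞ t² tr(ρ(t)²) dν(t)` and `D₃ = -2 ∫₀^∞ t² tr(ρ(t)³) dν(t)`. -/
theorem compatibility_inequality {d : ℕ} (v q α : ℝ) (W R : Matrix (Fin d) (Fin d) ℝ)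
    (ν : Measure ℝ)
    (hv : 0 < v) (hvq : 0 ≤ v - q) (hvq' : 0 ≤ v + q)
    (hW : W.PosDef) (hR : R.IsSymm)
    (hWR : (W - R).PosSemidef) (hWR' : (W + R).PosSemidef) (hα : 0 ≤ α) :
    let ξ : Matrix (Fin d) (Fin d) ℝ := v⁻¹ • (R - (q * v⁻¹) • W)
    let ρ : ℝ → Matrix (Fin d) (Fin d) ℝ :=
      fun t => invSqrt (v⁻¹ • W + t • 1) * ξ * invSqrt (v⁻¹ • W + t • 1)
    ∀ (_ : IntegrableOn (fun t => t ^ 2 * (ρ t * ρ t).trace) (Set.Ici (0 : ℝ)) ν)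
      (_ : IntegrableOn (fun t => t ^ 2 * (ρ t * ρ t * ρ t).trace) (Set.Ici (0 : ℝ)) ν),
    let D₂ : ℝ := α * (ξ * ξ).trace + ∫ t in Set.Ici (0 : ℝ), t ^ 2 * (ρ t * ρ t).trace ∂ν
    let D₃ : ℝ := -2 * ∫ t in Set.Ici (0 : ℝ), t ^ 2 * (ρ t * ρ t * ρ t).trace ∂ν
    0 ≤ 3 * (v - q) * D₂ + v * D₃ :=
  compatibility_inequality_general hv hvq hW.posSemidef hWR hα
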